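/- Suppose the standing assumptions on f, g, h, Ω, F hold together with Assumptions 1 and 2. Let c₀ ∈ ℝ be such that the sublevel set {x : F(x) ≤ c₀} is nonempty, and set M := sup{g(x) : x ∈ ℝⁿ, F(x) ≤ c₀} (a finite positive real). Let a > 0, let x ∈ ℝⁿ with F(x) ≤ c₀, set c := F(x), let y ∈ ∂g(x), let α satisfy 0 < α ≤ 1/(a·M + L), and let x̃ ∈ prox_{α·f}(x − α·∇h(x) + α·c·y). Then x̃ ∈ dom(F) and F(x̃) ≤ c − (a/2)·‖x̃ − x‖₂²; in particular F(x̃) ≤ c₀. -/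

import Mathlib

open Filter Topology
open scoped RealInnerProductSpace

noncomputable section

/-- The Fréchet subdifferential of an extended-real-valued function `φ` at `x`:
the set of `y` with `liminf_{z→x, z≠x} (φ z − φ x − ⟨y, z−x⟩)/‖z−x‖ ≥ 0`,
empty when `φ x = +∞`. -/
def fsub {n : ℕ} (φ : EuclideanSpace ℝ (Fin n) → EReal) (x : EuclideanSpace ℝ (Fin n)) :
    Set (EuclideanSpace ℝ (Fin n)) :=
  {y | φ x ≠ ⊤ ∧
    0 ≤ liminf (fun z => (φ z - φ x - ((⟪y, z - x⟫ : ℝ) : EReal)) / ((‖z - x‖ : ℝ) : EReal))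
      (𝓝[≠] x)}

/-- The limiting (Mordukhovich) subdifferential. -/
def lsub {n : ℕ} (φ : EuclideanSpace ℝ (Fin n) → EReal) (x : EuclideanSpace ℝ (Fin n)) :
    Set (EuclideanSpace ℝ (Fin n)) :=
  {y | ∃ u : ℕ → EuclideanSpace ℝ (Fin n), ∃ v : ℕ → EuclideanSpace ℝ (Fin n),
      Tendsto u atTop (𝓝 x) ∧ Tendsto (fun k => φ (u k)) atTop (𝓝 (φ x)) ∧
      (∀ k, v k ∈ fsub φ (u k)) ∧ Tendsto v atTop (𝓝 y)}

/-- The subdifferential of a convex real-valued function. -/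
def csub {n : ℕ} (g : EuclideanSpace ℝ (Fin n) → ℝ) (x : EuclideanSpace ℝ (Fin n)) :
    Set (EuclideanSpace ℝ (Fin n)) :=
  {y | ∀ z, g x + ⟪y, z - x⟫ ≤ g z}

/-- The (possibly set-valued) proximity operator of a proper lsc extended-real-valued
function `ψ` at `u`. -/
def proxSet {n : ℕ} (ψ : EuclideanSpace ℝ (Fin n) → EReal) (u : EuclideanSpace ℝ (Fin n)) :
    Set (EuclideanSpace ℝ (Fin n)) :=
  {y | ∀ z, ψ y + ((‖y - u‖ ^ 2 / 2 : ℝ) : EReal) ≤ ψ z + ((‖z - u‖ ^ 2 / 2 : ℝ) : EReal)}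

/-- The fractional objective `F = (f+h)/g` on `Ω ∩ dom f`, `+∞` elsewhere. -/
def Ffrac {n : ℕ} (f : EuclideanSpace ℝ (Fin n) → EReal) (g h : EuclideanSpace ℝ (Fin n) → ℝ) :
    EuclideanSpace ℝ (Fin n) → EReal :=
  fun x => if g x ≠ 0 ∧ f x ≠ ⊤ then ((((f x).toReal + h x) / g x : ℝ) : EReal) else ⊤

theorem descent_aux {n : ℕ} (h : EuclideanSpace ℝ (Fin n) → ℝ)
    (h' : EuclideanSpace ℝ (Fin n) → EuclideanSpace ℝ (Fin n)) (L : ℝ) (hL : 0 < L)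
    (hh_grad : ∀ z, HasGradientAt h (h' z) z)
    (hh_lip : LipschitzWith (Real.toNNReal L) h') (x d : EuclideanSpace ℝ (Fin n)) :
    h (x + d) ≤ h x + ⟪h' x, d⟫ + L / 2 * ‖d‖ ^ 2 := by
  have hd : ∀ t : ℝ, HasDerivAt
      (fun t : ℝ => h (x + t • d) - t * ⟪h' x, d⟫ - t ^ 2 * (L / 2 * ‖d‖ ^ 2))
      (⟪h' (x + t • d), d⟫ - ⟪h' x, d⟫ - 2 * t * (L / 2 * ‖d‖ ^ 2)) t := by
    intro t
    have h1 : HasDerivAt (fun t : ℝ => x + t • d) d t := by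
      simpa using ((hasDerivAt_id t).smul_const d).const_add x
    have h2 := (hh_grad (x + t • d)).hasFDerivAt.comp_hasDerivAt t h1
    have h3 := (h2.sub ((hasDerivAt_id t).mul_const ⟪h' x, d⟫)).sub
      ((hasDerivAt_pow 2 t).mul_const (L / 2 * ‖d‖ ^ 2))
    refine HasDerivAt.congr_deriv h3 ?_
    simp [InnerProductSpace.toDual_apply_apply]
  have hanti : AntitoneOn
      (fun t : ℝ => h (x + t • d) - t * ⟪h' x, d⟫ - t ^ 2 * (L / 2 * ‖d‖ ^ 2))
      (Set.Icc 0 1) := by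
    apply antitoneOn_of_deriv_nonpos (convex_Icc 0 1)
    · exact fun t _ => (hd t).continuousAt.continuousWithinAt
    · exact fun t _ => (hd t).differentiableAt.differentiableWithinAt
    · intro t ht
      rw [interior_Icc] at ht
      rw [(hd t).deriv, ← inner_sub_left]
      have h4 : ⟪h' (x + t • d) - h' x, d⟫ ≤ ‖h' (x + t • d) - h' x‖ * ‖d‖ :=
        real_inner_le_norm _ _
      have h5 := hh_lip.dist_le_mul (x + t • d) x
      rw [dist_eq_norm, dist_eq_norm, Real.coe_toNNReal L hL.le, add_sub_cancel_left, norm_smul,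
        Real.norm_of_nonneg ht.1.le] at h5
      nlinarith [mul_le_mul_of_nonneg_right h5 (norm_nonneg d)]
  have := hanti (Set.left_mem_Icc.2 zero_le_one) (Set.right_mem_Icc.2 zero_le_one) zero_le_one
  simp at this
  linarith

/-- Lemma 5.1 (key step): acceptance of the line-search step in PGSA_L. -/
theorem pgsa_line_search_acceptance
    {n : ℕ} (hn : 1 ≤ n)
    (f : EuclideanSpace ℝ (Fin n) → EReal) (g h : EuclideanSpace ℝ (Fin n) → ℝ)
    (h' : EuclideanSpace ℝ (Fin n) → EuclideanSpace ℝ (Fin n)) (L : ℝ)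
    (hf_ne_bot : ∀ z, f z ≠ ⊥) (hf_proper : ∃ z, f z ≠ ⊤)
    (hf_lsc : LowerSemicontinuous f)
    (hf_bdd : ∃ m : ℝ, ∀ z, (m : EReal) ≤ f z)
    (hf_cont : ContinuousOn f {z | f z ≠ ⊤})
    (hg_cvx : ConvexOn ℝ Set.univ g)
    (hL : 0 < L)
    (hh_grad : ∀ z, HasGradientAt h (h' z) z)
    (hh_lip : LipschitzWith (Real.toNNReal L) h')
    (hΩ : ∃ z, g z ≠ 0)
    (hfh : ∀ z, 0 ≤ f z + ((h z : ℝ) : EReal))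
    (hg_pos : ∀ z, f z ≠ ⊤ → g z ≠ 0 → 0 < g z)
    (hA1 : ∀ z, g z = 0 → f z + ((h z : ℝ) : EReal) ≠ 0)
    (hA2 : ∀ t : ℝ, Bornology.IsBounded {z | Ffrac f g h z ≤ (t : EReal)})
    (c₀ : ℝ) (hlev : ∃ z, Ffrac f g h z ≤ (c₀ : EReal))
    (M : ℝ) (hM : M = sSup (g '' {z | Ffrac f g h z ≤ (c₀ : EReal)}))
    (a : ℝ) (ha : 0 < a)
    (x : EuclideanSpace ℝ (Fin n)) (hx : Ffrac f g h x ≤ (c₀ : EReal))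
    (c : ℝ) (hc : c = (Ffrac f g h x).toReal)
    (y : EuclideanSpace ℝ (Fin n)) (hy : y ∈ csub g x)
    (α : ℝ) (hα_pos : 0 < α) (hα_le : α ≤ 1 / (a * M + L))
    (xt : EuclideanSpace ℝ (Fin n))
    (hxt : xt ∈ proxSet (fun z => ((α : ℝ) : EReal) * f z) (x - α • h' x + (α * c) • y)) :
    (g xt ≠ 0 ∧ f xt ≠ ⊤) ∧
      Ffrac f g h xt ≤ ((c - a / 2 * ‖xt - x‖ ^ 2 : ℝ) : EReal) ∧
      Ffrac f g h xt ≤ (c₀ : EReal) := by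
  have hxd : g x ≠ 0 ∧ f x ≠ ⊤ := by
    by_contra hcon
    simp [Ffrac, hcon] at hx
  have hFx : Ffrac f g h x = ((((f x).toReal + h x) / g x : ℝ) : EReal) := by
    simp only [Ffrac, if_pos hxd]
  have hgx := hg_pos x hxd.2 hxd.1
  rw [hFx, EReal.toReal_coe] at hc
  have hcc0 : c ≤ c₀ := by
    rw [hFx, ← hc] at hx
    exact_mod_cast hx
  have hcg : c * g x = (f x).toReal + h x := by
    rw [hc]; field_simp
  have hnn : ∀ z, f z ≠ ⊤ → 0 ≤ (f z).toReal + h z := by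
    intro z hz
    have := hfh z
    rw [← EReal.coe_toReal hz (hf_ne_bot z)] at this
    exact_mod_cast this
  have hc_nn : 0 ≤ c := by
    rw [hc]; exact div_nonneg (hnn x hxd.2) hgx.le
  -- boundedness of `g` on the level set
  have hgc : Continuous g := by
    have := hg_cvx.continuousOn isOpen_univ
    exact continuousOn_univ.1 this
  have hbdd : BddAbove (g '' {z | Ffrac f g h z ≤ (c₀ : EReal)}) := by
    have hK : IsCompact (closure {z | Ffrac f g h z ≤ (c₀ : EReal)}) :=
      (hA2 c₀).isCompact_closure
    exact (hK.bddAbove_image hgc.continuousOn).mono (Set.image_mono subset_closure)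
  have hMle : ∀ z, Ffrac f g h z ≤ (c₀ : EReal) → g z ≤ M := by
    intro z hz
    rw [hM]
    exact le_csSup hbdd ⟨z, hz, rfl⟩
  have hMpos : 0 < M := lt_of_lt_of_le hgx (hMle x hx)
  -- the proximal inequality
  have hp := hxt x
  have hfxt : f xt ≠ ⊤ := by
    intro htop
    simp only [htop] at hp
    rw [EReal.coe_mul_top_of_pos hα_pos, EReal.top_add_coe,
      ← EReal.coe_toReal hxd.2 (hf_ne_bot x)] at hp
    rw [← EReal.coe_mul, ← EReal.coe_add] at hp
    exact absurd hp (not_le.2 (EReal.coe_lt_top _))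
  simp only [] at hp
  rw [← EReal.coe_toReal hxd.2 (hf_ne_bot x), ← EReal.coe_toReal hfxt (hf_ne_bot xt),
    ← EReal.coe_mul, ← EReal.coe_add, ← EReal.coe_mul, ← EReal.coe_add, EReal.coe_le_coe_iff] at hp
  obtain ⟨d, rfl⟩ : ∃ d, xt = x + d := ⟨xt - x, by simp⟩
  have hdesc := descent_aux h h' L hL hh_grad hh_lip x d
  have hyd := hy (x + d)
  rw [add_sub_cancel_left] at hyd ⊢
  have e1 : x + d - (x - α • h' x + (α * c) • y) = d + (α • h' x - (α * c) • y) := by abel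
  have e2 : x - (x - α • h' x + (α * c) • y) = α • h' x - (α * c) • y := by abel
  rw [e1, e2, norm_add_sq_real, inner_sub_right, real_inner_smul_right, real_inner_smul_right,
    real_inner_comm, real_inner_comm y d] at hp
  have hden : 0 < a * M + L := by positivity
  have hα1 : α * (a * M + L) ≤ 1 := by
    rwa [le_div_iff₀ hden] at hα_le
  have hkey0 : α * ((f (x + d)).toReal + (a * M + L) / 2 * ‖d‖ ^ 2 + ⟪h' x, d⟫ - c * ⟪y, d⟫)
      ≤ α * (f x).toReal := by
    nlinarith [mul_le_mul_of_nonneg_right hα1 (sq_nonneg ‖d‖)]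
  have hkey1 := le_of_mul_le_mul_left hkey0 hα_pos
  have hkey : (f (x + d)).toReal + h (x + d) + a * M / 2 * ‖d‖ ^ 2 ≤ c * g (x + d) := by
    nlinarith [mul_le_mul_of_nonneg_left hyd hc_nn]
  have hq : 0 ≤ a * M / 2 * ‖d‖ ^ 2 := by positivity
  have hgne : g (x + d) ≠ 0 := by
    intro h0
    apply hA1 _ h0
    rw [h0, mul_zero] at hkey
    have h1 := hnn _ hfxt
    have h2 : (f (x + d)).toReal + h (x + d) = 0 := by linarith
    rw [← EReal.coe_toReal hfxt (hf_ne_bot _)]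
    exact_mod_cast h2
  have hgp := hg_pos _ hfxt hgne
  have hF : Ffrac f g h (x + d) = ((((f (x + d)).toReal + h (x + d)) / g (x + d) : ℝ) : EReal) := by
    simp only [Ffrac, if_pos (And.intro hgne hfxt)]
  have hF0 : Ffrac f g h (x + d) ≤ (c₀ : EReal) := by
    rw [hF, EReal.coe_le_coe_iff]
    refine le_trans ?_ hcc0
    rw [div_le_iff₀ hgp]
    linarith
  refine ⟨⟨hgne, hfxt⟩, ?_, hF0⟩
  have hgM := hMle _ hF0
  rw [hF, EReal.coe_le_coe_iff, div_le_iff₀ hgp]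
  have : a / 2 * ‖d‖ ^ 2 * g (x + d) ≤ a / 2 * ‖d‖ ^ 2 * M :=
    mul_le_mul_of_nonneg_left hgM (by positivity)
  linarith
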